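/- arXiv:1509.04900 — 2 statements merged into one kernel-verified Lean document; each statement's English description precedes it below -/
import Mathlib

section
/- The set U_1 ∩ (U_1 + (1 − λ)) equals the set of univoque points lying in f_4(K), i.e. U_1 ∩ (U_1 + (1 − λ)) = U_1 ∩ f_4(K), and these are exactly the points of K whose unique coding begins with the digit 4. Moreover dim_H(U_2) = dim_H(U_1 ∩ (U_1 + (1 − λ))) = dim_H(U_1). -/
open Filter Topology

/-- `codingApprox f i n = f (i 0) (f (i 1) (⋯ (f (i (n-1)) 0)))`, i.e. the `n`-th
approximation `f_{i_1} ∘ ⋯ ∘ f_{i_n} (0)` of the point coded by `i`. -/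
noncomputable def codingApprox (f : Fin 4 → ℝ → ℝ) : (ℕ → Fin 4) → ℕ → ℝ
  | _, 0 => 0
  | i, n + 1 => f (i 0) (codingApprox f (fun k => i (k + 1)) n)

/-- The set of codings of `x` for the IFS `f`. -/
def codings (f : Fin 4 → ℝ → ℝ) (x : ℝ) : Set (ℕ → Fin 4) :=
  {i | Tendsto (codingApprox f i) atTop (𝓝 x)}

/-!
Write `I = [0, 1]`. The bound on `λ` says that `f_3(I)` lies strictly to the left of `f_4(I)`, so
the only two first-level intervals that meet are `f_2(I)` and `f_3(I)`, and they meet exactly in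
`f_2 f_4 (I) = f_3 f_1 (I)`, where `f_2 ∘ f_4 = f_3 ∘ f_1`. Hence `f_1` and `f_4` preserve the
number of codings, `f_2 ∘ f_4` doubles it, and a point with several codings is the image under a
finite word of a point with half as many. All three descriptions of `U_1 ∩ (U_1 + (1 - λ))`
therefore amount to `f_4(U_1)`, and `U_2` contains the similar copy `f_2 f_4 (U_1)` of `U_1` while
being covered by countably many similar copies of `U_1`.
-/

open Set NNReal

section Codings

variable {f : Fin 4 → ℝ → ℝ} {d : Fin 4} {i : ℕ → Fin 4} {x y : ℝ} {r : ℝ≥0} {K : Set ℝ}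

/-- The digit sequence `d, i 0, i 1, …`: the coding of `f d y` induced by a coding `i` of `y`. -/
def prependDigit (d : Fin 4) (i : ℕ → Fin 4) : ℕ → Fin 4
  | 0 => d
  | n + 1 => i n

lemma prependDigit_injective (d : Fin 4) : Function.Injective (prependDigit d) :=
  fun _ _ h => funext fun n => congrFun h (n + 1)

lemma prependDigit_head_tail (i : ℕ → Fin 4) : prependDigit (i 0) (fun k => i (k + 1)) = i := by
  funext n
  cases n <;> rfl

lemma mem_codings_iff_tail (hf : IsClosedEmbedding (f (i 0))) :
    i ∈ codings f x ↔ ∃ y, f (i 0) y = x ∧ (fun k => i (k + 1)) ∈ codings f y := by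
  have tendsto_tail : i ∈ codings f x ↔
      Tendsto (f (i 0) ∘ codingApprox f (fun k => i (k + 1))) atTop (𝓝 x) :=
    (tendsto_add_atTop_iff_nat 1).symm
  rw [tendsto_tail]
  constructor
  · intro h
    obtain ⟨y, rfl⟩ := hf.isClosed_range.mem_of_tendsto h (.of_forall fun n => mem_range_self _)
    exact ⟨y, rfl, hf.isInducing.tendsto_nhds_iff.2 h⟩
  · rintro ⟨y, rfl, h⟩
    exact hf.isInducing.tendsto_nhds_iff.1 h

lemma sep_codings_apply (hf : IsClosedEmbedding (f d)) (y : ℝ) :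
    {i ∈ codings f (f d y) | i 0 = d} = prependDigit d '' codings f y := by
  ext i
  constructor
  · rintro ⟨hi, rfl⟩
    obtain ⟨z, hzy, hz⟩ := (mem_codings_iff_tail hf).1 hi
    exact ⟨_, hf.injective hzy ▸ hz, prependDigit_head_tail i⟩
  · rintro ⟨j, hj, rfl⟩
    exact ⟨(mem_codings_iff_tail hf).2 ⟨y, rfl, hj⟩, rfl⟩

lemma codings_apply_eq_image (hf : IsClosedEmbedding (f d))
    (hd : ∀ i ∈ codings f (f d y), i 0 = d) :
    codings f (f d y) = prependDigit d '' codings f y := by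
  rw [← sep_codings_apply hf, sep_eq_self_iff_mem_true.2 hd]

lemma exists_mem_dist_codingApprox_le (hf : ∀ d, LipschitzWith r (f d))
    (hK : ∀ d, MapsTo (f d) K K) {z : ℝ} (hz : z ∈ K) (n : ℕ) (i : ℕ → Fin 4) :
    ∃ y ∈ K, dist y (codingApprox f i n) ≤ r ^ n * dist z 0 := by
  induction n generalizing i with
  | zero => exact ⟨z, hz, by simp [codingApprox]⟩
  | succ n ih =>
    obtain ⟨y, hy, hyn⟩ := ih fun k => i (k + 1)
    refine ⟨f (i 0) y, hK _ hy, ((hf (i 0)).dist_le_mul _ _).trans ?_⟩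
    rw [pow_succ', mul_assoc]
    gcongr

lemma dist_codingApprox_le_of_orbit (hf : ∀ d, LipschitzWith r (f d)) (n : ℕ) {i : ℕ → Fin 4}
    {y : ℕ → ℝ} (hy : ∀ n, f (i n) (y (n + 1)) = y n) :
    dist (codingApprox f i n) (y 0) ≤ r ^ n * dist 0 (y n) := by
  induction n generalizing i y with
  | zero => simp [codingApprox]
  | succ n ih =>
    rw [← hy 0, pow_succ', mul_assoc]
    refine ((hf (i 0)).dist_le_mul _ _).trans ?_
    gcongr
    exact ih (y := fun n => y (n + 1)) fun n => hy (n + 1)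

lemma tendsto_pow_mul_zero (hr : r < 1) (c : ℝ) :
    Tendsto (fun n : ℕ => (r : ℝ) ^ n * c) atTop (𝓝 0) := by
  simpa using (tendsto_pow_atTop_nhds_zero_of_lt_one r.coe_nonneg hr).mul_const c

lemma mem_of_mem_codings (hf : ∀ d, LipschitzWith r (f d)) (hr : r < 1) (hclosed : IsClosed K)
    (hne : K.Nonempty) (hK : ∀ d, MapsTo (f d) K K) (hi : i ∈ codings f x) : x ∈ K := by
  obtain ⟨z, hz⟩ := hne
  choose y hyK hy using fun n => exists_mem_dist_codingApprox_le hf hK hz n i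
  have dist_tendsto : Tendsto (fun n => dist (codingApprox f i n) (y n)) atTop (𝓝 0) :=
    squeeze_zero (fun _ => dist_nonneg) (fun n => dist_comm (y n) _ ▸ hy n)
      (tendsto_pow_mul_zero hr _)
  exact hclosed.mem_of_tendsto (hi.congr_dist dist_tendsto) (.of_forall hyK)

lemma codings_nonempty_of_mem (hf : ∀ d, LipschitzWith r (f d)) (hr : r < 1)
    (hbdd : Bornology.IsBounded K) (hK : K ⊆ ⋃ d, f d '' K) (hx : x ∈ K) :
    (codings f x).Nonempty := by
  have exists_preimage (y : K) : ∃ d, ∃ z : K, f d z = y := by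
    obtain ⟨d, z, hz, hzy⟩ := mem_iUnion.1 (hK y.2)
    exact ⟨d, ⟨z, hz⟩, hzy⟩
  choose digit pre hpre using exists_preimage
  let orbit (n : ℕ) : K := pre^[n] ⟨x, hx⟩
  have orbit_succ (n : ℕ) : f (digit (orbit n)) (orbit (n + 1)) = orbit n := by
    simp only [orbit, Function.iterate_succ_apply', hpre]
  obtain ⟨M, hM⟩ := hbdd.exists_norm_le
  refine ⟨fun n => digit (orbit n), tendsto_iff_dist_tendsto_zero.2 <|
    squeeze_zero (fun _ => dist_nonneg) (fun n => ?_) (tendsto_pow_mul_zero hr M)⟩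
  refine (dist_codingApprox_le_of_orbit hf n (y := fun n => orbit n) orbit_succ).trans ?_
  gcongr
  simpa using hM _ (orbit n).2

lemma mem_iff_codings_nonempty (hf : ∀ d, LipschitzWith r (f d)) (hr : r < 1)
    (hcpt : IsCompact K) (hne : K.Nonempty) (hK : K = ⋃ d, f d '' K) :
    x ∈ K ↔ (codings f x).Nonempty := by
  refine ⟨codings_nonempty_of_mem hf hr hcpt.isBounded hK.subset, fun ⟨i, hi⟩ => ?_⟩
  refine mem_of_mem_codings hf hr hcpt.isClosed hne (fun d y hy => ?_) hi
  exact hK ▸ mem_iUnion_of_mem d (mem_image_of_mem _ hy)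

/-- The set of points with exactly `k` codings; for `1 ≤ k < ⊤` this is the set `U_k`. All such
points lie in the attractor, which is therefore not mentioned. -/
def multiplicitySet (f : Fin 4 → ℝ → ℝ) (k : ℕ∞) : Set ℝ :=
  {x | (codings f x).encard = k}

lemma codings_nonempty_of_mem_multiplicitySet {k : ℕ∞} (hk : k ≠ 0)
    (hx : x ∈ multiplicitySet f k) : (codings f x).Nonempty :=
  encard_ne_zero.1 (Eq.trans_ne hx hk)

lemma sep_encard_codings_eq_multiplicitySet {k : ℕ∞} (hk : k ≠ 0)
    (hK : ∀ x, (codings f x).Nonempty → x ∈ K) :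
    {x ∈ K | (codings f x).encard = k} = multiplicitySet f k :=
  sep_eq_of_subset fun x hx => hK x (codings_nonempty_of_mem_multiplicitySet hk hx)

lemma dimH_image_foldr_le (hf : ∀ d, LipschitzWith r (f d)) (v : List (Fin 4)) (s : Set ℝ) :
    dimH ((fun w => v.foldr f w) '' s) ≤ dimH s := by
  induction v with
  | nil => simp
  | cons d v ih =>
    calc dimH ((fun w => f d (v.foldr f w)) '' s)
        = dimH (f d '' ((fun w => v.foldr f w) '' s)) := by rw [image_image]
      _ ≤ dimH ((fun w => v.foldr f w) '' s) := (hf d).dimH_image_le _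
      _ ≤ dimH s := ih

end Codings

section OverlapIFS

variable {l : ℝ} {d e : Fin 4} {w x y z : ℝ}

/-- The system of the theorem for the ratio `l`, with its maps indexed from `0`: `overlapIFS l d`
is `f_{d+1}`. The translation part is kept as a separate summand. -/
def overlapIFS (l : ℝ) (d : Fin 4) (x : ℝ) : ℝ :=
  l * x + ![0, 2 * l, 3 * l - l ^ 2, 1 - l] d

lemma dist_overlapIFS (l : ℝ) (d : Fin 4) (x y : ℝ) :
    dist (overlapIFS l d x) (overlapIFS l d y) = ‖l‖ * dist x y := by
  simp [overlapIFS, Real.dist_eq, ← mul_sub, abs_mul]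

lemma lipschitzWith_overlapIFS (l : ℝ) (d : Fin 4) : LipschitzWith ‖l‖₊ (overlapIFS l d) :=
  .of_dist_le_mul fun x y => (dist_overlapIFS l d x y).le

lemma antilipschitzWith_overlapIFS (hl : l ≠ 0) (d : Fin 4) :
    AntilipschitzWith ‖l‖₊⁻¹ (overlapIFS l d) :=
  .of_le_mul_dist fun x y => by
    simp [dist_overlapIFS, hl]

lemma isClosedEmbedding_overlapIFS (hl : l ≠ 0) (d : Fin 4) :
    IsClosedEmbedding (overlapIFS l d) :=
  (antilipschitzWith_overlapIFS hl d).isClosedEmbedding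
    (lipschitzWith_overlapIFS l d).uniformContinuous

lemma dimH_image_overlapIFS (hl : l ≠ 0) (d : Fin 4) (s : Set ℝ) :
    dimH (overlapIFS l d '' s) = dimH s :=
  ((lipschitzWith_overlapIFS l d).dimH_image_le s).antisymm
    ((antilipschitzWith_overlapIFS hl d).le_dimH_image s)

lemma overlapIFS_one_three (l w : ℝ) :
    overlapIFS l 1 (overlapIFS l 3 w) = overlapIFS l 2 (overlapIFS l 0 w) := by
  simp only [overlapIFS, Matrix.cons_val]
  ring

lemma overlapIFS_three (l w : ℝ) : overlapIFS l 3 w = overlapIFS l 0 w + (1 - l) := by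
  simp [overlapIFS]

lemma five_mul_lt_one_add_sq (hl : l < (5 - √21) / 2) : 5 * l < 1 + l ^ 2 := by
  nlinarith [Real.sq_sqrt (show (0 : ℝ) ≤ 21 by norm_num), Real.sqrt_nonneg 21]

lemma lt_one_of_lt_half_five_sub_sqrt (hl : l < (5 - √21) / 2) : l < 1 := by
  have : 4 < √21 := Real.lt_sqrt_of_sq_lt (by norm_num)
  linarith

section UnitInterval

variable (hl : l ∈ Ioo 0 ((5 - √21) / 2))
include hl

lemma nnnorm_ratio_lt_one : ‖l‖₊ < 1 := by
  rw [← coe_lt_coe, coe_nnnorm, Real.norm_of_nonneg hl.1.le]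
  exact lt_one_of_lt_half_five_sub_sqrt hl.2

lemma sq_lt_self_of_mem_Ioo : l ^ 2 < l :=
  pow_lt_self_of_lt_one₀ hl.1 (lt_one_of_lt_half_five_sub_sqrt hl.2) one_lt_two

lemma mapsTo_overlapIFS_Icc (d : Fin 4) : MapsTo (overlapIFS l d) (Icc 0 1) (Icc 0 1) := by
  rintro x ⟨hx0, hx1⟩
  have hl0 := hl.1
  have hsep := five_mul_lt_one_add_sq hl.2
  have hsq := sq_lt_self_of_mem_Ioo hl
  have hlx0 := mul_nonneg hl.1.le hx0
  have hlx1 := mul_le_of_le_one_right hl.1.le hx1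
  fin_cases d <;> constructor <;>
    simp only [Fin.zero_eta, Fin.mk_one, Fin.reduceFinMk, overlapIFS, Matrix.cons_val] <;>
    linarith

lemma exists_eq_overlapIFS_of_add_one_sub (hz : 0 ≤ z) (hz' : z + (1 - l) ≤ 1) :
    ∃ w ∈ Icc (0 : ℝ) 1, z + (1 - l) = overlapIFS l 3 w ∧ z = overlapIFS l 0 w := by
  have hzw : z = overlapIFS l 0 (z / l) := by simp [overlapIFS, mul_div_cancel₀ _ hl.1.ne']
  refine ⟨z / l, ⟨div_nonneg hz hl.1.le, (div_le_one hl.1).2 (by linarith)⟩, ?_, hzw⟩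
  rw [overlapIFS_three, ← hzw]

lemma digits_eq_of_overlapIFS_eq (hde : d < e) (hy : y ≤ 1) (hz : 0 ≤ z)
    (h : overlapIFS l d y = overlapIFS l e z) : d = 1 ∧ e = 2 := by
  have hl0 := hl.1
  have hsep := five_mul_lt_one_add_sq hl.2
  have hsq := sq_lt_self_of_mem_Ioo hl
  have hly := mul_le_of_le_one_right hl.1.le hy
  have hlz := mul_nonneg hl.1.le hz
  fin_cases d <;> fin_cases e <;>
    simp only [Fin.zero_eta, Fin.mk_one, Fin.reduceFinMk, overlapIFS, Matrix.cons_val] at h hde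
  all_goals first
    | exact ⟨rfl, rfl⟩
    | exact absurd hde (by decide)
    | linarith

lemma exists_of_overlapIFS_one_eq_two (hy : y ≤ 1) (hz : 0 ≤ z)
    (h : overlapIFS l 1 y = overlapIFS l 2 z) :
    ∃ w ∈ Icc (0 : ℝ) 1, y = overlapIFS l 3 w ∧ z = overlapIFS l 0 w := by
  have hyz : y = z + (1 - l) := by
    refine mul_left_cancel₀ hl.1.ne' ?_
    simp only [overlapIFS, Matrix.cons_val] at h
    linarith
  exact hyz ▸ exists_eq_overlapIFS_of_add_one_sub hl hz (hyz ▸ hy)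

lemma mem_Icc_of_codings_nonempty (hx : (codings (overlapIFS l) x).Nonempty) :
    x ∈ Icc (0 : ℝ) 1 :=
  mem_of_mem_codings (lipschitzWith_overlapIFS l) (nnnorm_ratio_lt_one hl) isClosed_Icc
    (nonempty_Icc.2 zero_le_one) (mapsTo_overlapIFS_Icc hl) hx.some_mem

lemma exists_mem_Icc_of_mem_codings {i : ℕ → Fin 4} (hi : i ∈ codings (overlapIFS l) x) :
    ∃ y ∈ Icc (0 : ℝ) 1, overlapIFS l (i 0) y = x := by
  obtain ⟨y, hyx, hy⟩ :=
    (mem_codings_iff_tail (isClosedEmbedding_overlapIFS hl.1.ne' (i 0))).1 hi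
  exact ⟨y, mem_Icc_of_codings_nonempty hl ⟨_, hy⟩, hyx⟩

lemma codings_overlapIFS_of_extreme_digit (hd : d = 0 ∨ d = 3) (hy : y ∈ Icc 0 1) :
    codings (overlapIFS l) (overlapIFS l d y) = prependDigit d '' codings (overlapIFS l) y := by
  refine codings_apply_eq_image (isClosedEmbedding_overlapIFS hl.1.ne' d) fun i hi => ?_
  obtain ⟨z, hz, hzy⟩ := exists_mem_Icc_of_mem_codings hl hi
  rcases lt_trichotomy (i 0) d with hlt | heq | hgt
  · have := digits_eq_of_overlapIFS_eq hl hlt hz.2 hy.1 hzy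
    omega
  · exact heq
  · have := digits_eq_of_overlapIFS_eq hl hgt hy.2 hz.1 hzy.symm
    omega

lemma encard_codings_overlapIFS_of_extreme_digit (hd : d = 0 ∨ d = 3) (hy : y ∈ Icc 0 1) :
    (codings (overlapIFS l) (overlapIFS l d y)).encard = (codings (overlapIFS l) y).encard := by
  rw [codings_overlapIFS_of_extreme_digit hl hd hy, (prependDigit_injective d).encard_image]

lemma codings_overlapIFS_one_three (hw : w ∈ Icc 0 1) :
    codings (overlapIFS l) (overlapIFS l 1 (overlapIFS l 3 w)) =
      prependDigit 1 '' codings (overlapIFS l) (overlapIFS l 3 w) ∪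
        prependDigit 2 '' codings (overlapIFS l) (overlapIFS l 0 w) := by
  have hclosed := isClosedEmbedding_overlapIFS hl.1.ne'
  rw [← sep_codings_apply (hclosed 1), ← sep_codings_apply (hclosed 2), ← overlapIFS_one_three,
    ← sep_or, eq_comm, sep_eq_self_iff_mem_true]
  intro i hi
  obtain ⟨z, hz, hzx⟩ := exists_mem_Icc_of_mem_codings hl hi
  have hw3 : overlapIFS l 3 w ∈ Icc 0 1 := mapsTo_overlapIFS_Icc hl 3 hw
  rcases lt_trichotomy (i 0) 1 with hlt | heq | hgt
  · exact .inl (digits_eq_of_overlapIFS_eq hl hlt hz.2 hw3.1 hzx).1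
  · exact .inl heq
  · exact .inr (digits_eq_of_overlapIFS_eq hl hgt hw3.2 hz.1 hzx.symm).2

lemma encard_codings_overlapIFS_one_three (hw : w ∈ Icc 0 1) :
    (codings (overlapIFS l) (overlapIFS l 1 (overlapIFS l 3 w))).encard =
      2 * (codings (overlapIFS l) w).encard := by
  have hdisj (s t : Set (ℕ → Fin 4)) : Disjoint (prependDigit 1 '' s) (prependDigit 2 '' t) := by
    rw [disjoint_left]
    rintro _ ⟨i, -, rfl⟩ ⟨j, -, h⟩
    exact absurd (congrFun h 0) (by simp [prependDigit])
  rw [codings_overlapIFS_one_three hl hw, encard_union_eq (hdisj _ _),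
    (prependDigit_injective 1).encard_image, (prependDigit_injective 2).encard_image,
    encard_codings_overlapIFS_of_extreme_digit hl (.inr rfl) hw,
    encard_codings_overlapIFS_of_extreme_digit hl (.inl rfl) hw, two_mul]

lemma exists_eq_one_three_of_head_ne {i j : ℕ → Fin 4} (hi : i ∈ codings (overlapIFS l) x)
    (hj : j ∈ codings (overlapIFS l) x) (hij : i 0 ≠ j 0) :
    ∃ w ∈ Icc (0 : ℝ) 1, x = overlapIFS l 1 (overlapIFS l 3 w) := by
  wlog hlt : i 0 < j 0 generalizing i j
  · exact this hj hi hij.symm (hij.lt_or_gt.resolve_left hlt)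
  obtain ⟨y, hy, hyx⟩ := exists_mem_Icc_of_mem_codings hl hi
  obtain ⟨z, hz, hzx⟩ := exists_mem_Icc_of_mem_codings hl hj
  obtain ⟨hi1, hj2⟩ := digits_eq_of_overlapIFS_eq hl hlt hy.2 hz.1 (hyx.trans hzx.symm)
  rw [hi1] at hyx
  rw [hj2] at hzx
  obtain ⟨w, hw, rfl, -⟩ := exists_of_overlapIFS_one_eq_two hl hy.2 hz.1 (hyx.trans hzx.symm)
  exact ⟨w, hw, hyx.symm⟩

lemma exists_word_encard_eq_two_mul {i j : ℕ → Fin 4} (hi : i ∈ codings (overlapIFS l) x)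
    (hj : j ∈ codings (overlapIFS l) x) (hij : i ≠ j) :
    ∃ (v : List (Fin 4)) (w : ℝ), v.foldr (overlapIFS l) w = x ∧
      (codings (overlapIFS l) x).encard = 2 * (codings (overlapIFS l) w).encard := by
  obtain ⟨n, hn⟩ := Function.ne_iff.1 hij
  clear hij
  induction n generalizing x i j with
  | zero =>
    obtain ⟨w, hw, rfl⟩ := exists_eq_one_three_of_head_ne hl hi hj hn
    exact ⟨[1, 3], w, rfl, encard_codings_overlapIFS_one_three hl hw⟩
  | succ n ih =>
    by_cases hhead : ∀ k ∈ codings (overlapIFS l) x, k 0 = i 0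
    · have hclosed := isClosedEmbedding_overlapIFS hl.1.ne' (i 0)
      obtain ⟨y, rfl, hiy⟩ := (mem_codings_iff_tail hclosed).1 hi
      have hcodings := codings_apply_eq_image hclosed hhead
      obtain ⟨j', hjy, rfl⟩ := hcodings ▸ hj
      obtain ⟨v, w, rfl, hcard⟩ := ih hiy hjy hn
      refine ⟨i 0 :: v, w, rfl, ?_⟩
      rw [hcodings, (prependDigit_injective _).encard_image, hcard]
    · push Not at hhead
      obtain ⟨k, hk, hki⟩ := hhead
      obtain ⟨w, hw, rfl⟩ := exists_eq_one_three_of_head_ne hl hk hi hki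
      exact ⟨[1, 3], w, rfl, encard_codings_overlapIFS_one_three hl hw⟩

lemma mem_Icc_of_mem_multiplicitySet {k : ℕ∞} (hk : k ≠ 0)
    (hx : x ∈ multiplicitySet (overlapIFS l) k) : x ∈ Icc (0 : ℝ) 1 :=
  mem_Icc_of_codings_nonempty hl (codings_nonempty_of_mem_multiplicitySet hk hx)

lemma multiplicitySet_two_mul_subset {k : ℕ∞} (hk : k ≠ 0) :
    multiplicitySet (overlapIFS l) (2 * k) ⊆
      ⋃ v : List (Fin 4),
        (fun w => v.foldr (overlapIFS l) w) '' multiplicitySet (overlapIFS l) k := by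
  intro x hx
  have one_lt_encard : 1 < (codings (overlapIFS l) x).encard := by
    calc 1 < 2 * 1 := by norm_num
      _ ≤ 2 * k := by gcongr; exact Order.one_le_iff_pos.2 (pos_of_ne_zero hk)
      _ = _ := hx.symm
  obtain ⟨i, j, hi, hj, hij⟩ := one_lt_encard_iff.1 one_lt_encard
  obtain ⟨v, w, hvw, hcard⟩ := exists_word_encard_eq_two_mul hl hi hj hij
  refine mem_iUnion.2 ⟨v, w, ?_, hvw⟩
  exact (ENat.mul_right_strictMono two_ne_zero (by decide)).injective (hcard.symm.trans hx)

lemma dimH_multiplicitySet_two_mul {k : ℕ∞} (hk : k ≠ 0) :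
    dimH (multiplicitySet (overlapIFS l) (2 * k)) = dimH (multiplicitySet (overlapIFS l) k) := by
  apply le_antisymm
  · refine (dimH_mono (multiplicitySet_two_mul_subset hl hk)).trans ?_
    rw [dimH_iUnion]
    exact iSup_le fun v => dimH_image_foldr_le (lipschitzWith_overlapIFS l) v _
  · rw [← dimH_image_overlapIFS hl.1.ne' 3, ← dimH_image_overlapIFS hl.1.ne' 1]
    refine dimH_mono ?_
    rintro _ ⟨_, ⟨w, hw, rfl⟩, rfl⟩
    have hwI := mem_Icc_of_mem_multiplicitySet hl hk hw
    exact (encard_codings_overlapIFS_one_three hl hwI).trans (congrArg (2 * ·) hw)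

lemma overlapIFS_mem_multiplicitySet_iff {k : ℕ∞} (hd : d = 0 ∨ d = 3) (hy : y ∈ Icc 0 1) :
    overlapIFS l d y ∈ multiplicitySet (overlapIFS l) k ↔ y ∈ multiplicitySet (overlapIFS l) k := by
  simp only [multiplicitySet, mem_ofPred_eq,
    encard_codings_overlapIFS_of_extreme_digit hl hd hy]

lemma multiplicitySet_inter_add_eq {k : ℕ∞} (hk : k ≠ 0) :
    multiplicitySet (overlapIFS l) k ∩
        (fun u => u + (1 - l)) '' multiplicitySet (overlapIFS l) k =
      overlapIFS l 3 '' multiplicitySet (overlapIFS l) k := by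
  ext x
  constructor
  · rintro ⟨hx, u, hu, rfl⟩
    obtain ⟨w, hw, -, rfl⟩ := exists_eq_overlapIFS_of_add_one_sub hl
      (mem_Icc_of_mem_multiplicitySet hl hk hu).1 (mem_Icc_of_mem_multiplicitySet hl hk hx).2
    exact ⟨w, (overlapIFS_mem_multiplicitySet_iff hl (.inl rfl) hw).1 hu, overlapIFS_three l w⟩
  · rintro ⟨w, hw, rfl⟩
    have hwI := mem_Icc_of_mem_multiplicitySet hl hk hw
    exact ⟨(overlapIFS_mem_multiplicitySet_iff hl (.inr rfl) hwI).2 hw, overlapIFS l 0 w,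
      (overlapIFS_mem_multiplicitySet_iff hl (.inl rfl) hwI).2 hw, (overlapIFS_three l w).symm⟩

lemma multiplicitySet_inter_image_eq {k : ℕ∞} (hk : k ≠ 0) {K : Set ℝ}
    (hK : ∀ x, x ∈ K ↔ (codings (overlapIFS l) x).Nonempty) :
    multiplicitySet (overlapIFS l) k ∩ overlapIFS l 3 '' K =
      overlapIFS l 3 '' multiplicitySet (overlapIFS l) k := by
  ext x
  constructor
  · rintro ⟨hx, y, hy, rfl⟩
    have hyI := mem_Icc_of_codings_nonempty hl ((hK y).1 hy)
    exact mem_image_of_mem _ ((overlapIFS_mem_multiplicitySet_iff hl (.inr rfl) hyI).1 hx)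
  · rintro ⟨y, hy, rfl⟩
    have hyI := mem_Icc_of_mem_multiplicitySet hl hk hy
    have hyK : y ∈ K := (hK y).2 (codings_nonempty_of_mem_multiplicitySet hk hy)
    exact ⟨(overlapIFS_mem_multiplicitySet_iff hl (.inr rfl) hyI).2 hy, mem_image_of_mem _ hyK⟩

lemma setOf_codings_eq_singleton_head_three :
    {x | ∃ i, codings (overlapIFS l) x = {i} ∧ i 0 = 3} =
      overlapIFS l 3 '' multiplicitySet (overlapIFS l) 1 := by
  ext x
  constructor
  · rintro ⟨i, hi, hi3⟩
    obtain ⟨y, hy, rfl⟩ := exists_mem_Icc_of_mem_codings hl (hi ▸ mem_singleton i)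
    rw [hi3] at hi ⊢
    exact mem_image_of_mem _ <| (overlapIFS_mem_multiplicitySet_iff hl (.inr rfl) hy).1 <|
      encard_eq_one.2 ⟨i, hi⟩
  · rintro ⟨y, hy, rfl⟩
    obtain ⟨i, hi⟩ := encard_eq_one.1 hy
    have hyI := mem_Icc_of_mem_multiplicitySet hl one_ne_zero hy
    exact ⟨prependDigit 3 i, by
      rw [codings_overlapIFS_of_extreme_digit hl (.inr rfl) hyI, hi, image_singleton], rfl⟩

end UnitInterval

end OverlapIFS

/-- `U_1 ∩ (U_1 + (1 - λ)) = U_1 ∩ f_4(K)`, this set consists exactly of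
the points whose unique coding begins with the digit `4`, and
`dim_H (U_2) = dim_H (U_1 ∩ (U_1 + (1 - λ))) = dim_H (U_1)`. -/
theorem statement10
    (lam : ℝ) (hlam : 0 < lam ∧ lam < (5 - Real.sqrt 21) / 2)
    (f : Fin 4 → ℝ → ℝ)
    (hf : f = ![fun x => lam * x, fun x => lam * x + 2 * lam,
      fun x => lam * x + 3 * lam - lam ^ 2, fun x => lam * x + 1 - lam])
    (K : Set ℝ) (hKne : K.Nonempty) (hKcpt : IsCompact K)
    (hK : K = f 0 '' K ∪ f 1 '' K ∪ f 2 '' K ∪ f 3 '' K)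
    (U : ℕ → Set ℝ)
    (hU : ∀ k : ℕ, U k = {x ∈ K | (codings f x).encard = (k : ℕ∞)})
    :
    U 1 ∩ (fun u => u + (1 - lam)) '' U 1 = U 1 ∩ f 3 '' K ∧
    U 1 ∩ (fun u => u + (1 - lam)) '' U 1 =
      {x | ∃ i : ℕ → Fin 4, codings f x = {i} ∧ i 0 = 3} ∧
    dimH (U 2) = dimH (U 1 ∩ (fun u => u + (1 - lam)) '' U 1) ∧
    dimH (U 2) = dimH (U 1) := by
  obtain rfl : f = overlapIFS lam := by
    rw [hf]
    funext d x
    fin_cases d <;> simp [overlapIFS] <;> ring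
  have mem_K (x : ℝ) : x ∈ K ↔ (codings (overlapIFS lam) x).Nonempty := by
    refine mem_iff_codings_nonempty (lipschitzWith_overlapIFS lam) (nnnorm_ratio_lt_one hlam)
      hKcpt hKne (hK.trans ?_)
    ext x
    simp only [mem_union, mem_iUnion, Fin.exists_fin_succ, Fin.exists_fin_zero]
    tauto
  have hU' (k : ℕ) (hk : k ≠ 0) : U k = multiplicitySet (overlapIFS lam) k := by
    rw [hU, sep_encard_codings_eq_multiplicitySet (by exact_mod_cast hk) fun x => (mem_K x).2]
  have dimH_two_eq_one : dimH (U 2) = dimH (U 1) := by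
    simpa [hU'] using dimH_multiplicitySet_two_mul hlam one_ne_zero
  have inter_add_eq : U 1 ∩ (fun u => u + (1 - lam)) '' U 1 = overlapIFS lam 3 '' U 1 := by
    simpa [hU'] using multiplicitySet_inter_add_eq hlam one_ne_zero
  rw [inter_add_eq, dimH_image_overlapIFS hlam.1.ne', dimH_two_eq_one, hU' 1 one_ne_zero]
  exact ⟨(multiplicitySet_inter_image_eq hlam one_ne_zero mem_K).symm,
    (setOf_codings_eq_singleton_head_three hlam).symm, rfl, rfl⟩
end

section
/- For every integer k ≥ 1, f_2(f_4(U_{2^k})) ⊆ U_{2^{k+1}}, i.e. if y ∈ K has exactly 2^k codings then f_2(f_4(y)) has exactly 2^{k+1} codings. -/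
open Filter Topology

/-!
Each branch is invertible, so splitting off the first digit gives `N(x) = ∑ₐ N(fₐ⁻¹ x)` for the
number `N(x)` of codings, and only those `a` with `x ∈ fₐ [0, 1]` contribute. The bound on `λ` says
that `f₁ [0, 1]` and `f₄ [0, 1]` are disjoint from the three other images, whereas `f₂` and `f₃`
overlap exactly: `f₂ ∘ f₄ = f₃ ∘ f₁`. Hence
`N(f₂ f₄ y) = N(f₄ y) + N(f₁ y) = N(y) + N(y)`.
-/

section ConsDigit

variable {α : Type*}

/-- The sequence obtained by prepending the digit `a` to `i`. -/
def consDigit (a : α) (i : ℕ → α) : ℕ → α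
  | 0 => a
  | n + 1 => i n

theorem consDigit_injective (a : α) : Function.Injective (consDigit a) :=
  fun _ _ h ↦ funext fun n ↦ congrFun h (n + 1)

theorem consDigit_shift (i : ℕ → α) : consDigit (i 0) (fun n ↦ i (n + 1)) = i :=
  funext fun n ↦ by cases n <;> rfl

end ConsDigit

section Counting

variable {S : Set ℝ}

theorem codingApprox_mem {f : Fin 4 → ℝ → ℝ} (hzero : 0 ∈ S) (hmaps : ∀ a, Set.MapsTo (f a) S S)
    (i : ℕ → Fin 4) (n : ℕ) : codingApprox f i n ∈ S := by
  induction n generalizing i with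
  | zero => exact hzero
  | succ n ih => exact hmaps _ (ih _)

theorem mem_of_codings_nonempty {f : Fin 4 → ℝ → ℝ} (hS : IsClosed S) (hzero : 0 ∈ S)
    (hmaps : ∀ a, Set.MapsTo (f a) S S) {x : ℝ} (hx : (codings f x).Nonempty) : x ∈ S :=
  let ⟨i, hi⟩ := hx
  hS.mem_of_tendsto hi (.of_forall (codingApprox_mem hzero hmaps i))

variable {e : Fin 4 → ℝ ≃ₜ ℝ}

theorem mem_codings_iff_shift_mem (i : ℕ → Fin 4) (x : ℝ) :
    i ∈ codings (fun a ↦ e a) x ↔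
      (fun n ↦ i (n + 1)) ∈ codings (fun a ↦ e a) ((e (i 0)).symm x) := by
  have tendsto_shift := (e (i 0)).isInducing.tendsto_nhds_iff (l := atTop)
    (f := codingApprox (fun a ↦ e a) fun n ↦ i (n + 1)) (y := (e (i 0)).symm x)
  rw [Homeomorph.apply_symm_apply] at tendsto_shift
  exact (tendsto_add_atTop_iff_nat 1).symm.trans tendsto_shift.symm

theorem codings_eq_iUnion_image_consDigit (x : ℝ) :
    codings (fun a ↦ e a) x =
      ⋃ a, consDigit a '' codings (fun a ↦ e a) ((e a).symm x) := by
  ext i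
  simp only [Set.mem_iUnion, Set.mem_image]
  constructor
  · intro hi
    exact ⟨i 0, _, (mem_codings_iff_shift_mem i x).1 hi, consDigit_shift i⟩
  · rintro ⟨a, j, hj, rfl⟩
    exact (mem_codings_iff_shift_mem _ x).2 hj

theorem encard_codings_eq_sum (x : ℝ) :
    (codings (fun a ↦ e a) x).encard =
      ∑ a, (codings (fun a ↦ e a) ((e a).symm x)).encard := by
  have disjoint_cons : Pairwise (Function.onFun Disjoint fun a ↦
      consDigit a '' codings (fun a ↦ e a) ((e a).symm x)) := by
    intro a b hab
    refine Set.disjoint_left.2 ?_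
    rintro _ ⟨i, -, rfl⟩ ⟨j, -, hji⟩
    exact hab (congrFun hji 0).symm
  rw [codings_eq_iUnion_image_consDigit, Set.encard_iUnion_of_finite disjoint_cons,
    finsum_eq_sum_of_fintype]
  simp only [(consDigit_injective _).encard_image]

theorem encard_codings_eq_sum_of_notMem_image (hS : IsClosed S) (hzero : 0 ∈ S)
    (hmaps : ∀ a, Set.MapsTo (e a) S S) {x : ℝ} (s : Finset (Fin 4))
    (hs : ∀ a ∉ s, x ∉ e a '' S) :
    (codings (fun a ↦ e a) x).encard =
      ∑ a ∈ s, (codings (fun a ↦ e a) ((e a).symm x)).encard := by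
  rw [encard_codings_eq_sum]
  refine (Finset.sum_subset s.subset_univ fun a _ ha ↦ ?_).symm
  rw [Set.encard_eq_zero, ← Set.not_nonempty_iff_eq_empty]
  intro hne
  exact hs a ha ⟨_, mem_of_codings_nonempty hS hzero hmaps hne, (e a).apply_symm_apply x⟩

/-- The branch `e a` is isolated in `S` when its image of `S` meets that of no other branch, so
that a point of `e a '' S` has `a` as its only possible first digit. -/
def IsIsolatedBranch (e : Fin 4 → ℝ ≃ₜ ℝ) (S : Set ℝ) (a : Fin 4) : Prop :=
  ∀ b ≠ a, Disjoint (e a '' S) (e b '' S)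

theorem IsIsolatedBranch.notMem_image {a b : Fin 4} (ha : IsIsolatedBranch e S a) (hba : b ≠ a)
    {x : ℝ} (hx : x ∈ e b '' S) : x ∉ e a '' S :=
  fun hxa ↦ Set.disjoint_left.1 (ha b hba) hxa hx

theorem IsIsolatedBranch.encard_codings_apply {a : Fin 4} (ha : IsIsolatedBranch e S a)
    (hS : IsClosed S) (hzero : 0 ∈ S) (hmaps : ∀ a, Set.MapsTo (e a) S S) {y : ℝ} (hy : y ∈ S) :
    (codings (fun a ↦ e a) (e a y)).encard = (codings (fun a ↦ e a) y).encard := by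
  have other_notMem : ∀ b ∉ ({a} : Finset (Fin 4)), e a y ∉ e b '' S := fun b hb ↦
    Set.disjoint_left.1 (ha b (by simpa using hb)) (Set.mem_image_of_mem _ hy)
  rw [encard_codings_eq_sum_of_notMem_image hS hzero hmaps {a} other_notMem,
    Finset.sum_singleton, Homeomorph.symm_apply_apply]

theorem encard_codings_of_exact_overlap (hS : IsClosed S) (hzero : 0 ∈ S)
    (hmaps : ∀ a, Set.MapsTo (e a) S S) {a b c d : Fin 4} (hab : a ≠ b)
    (hisol : ∀ k ∉ ({a, b} : Finset (Fin 4)), IsIsolatedBranch e S k)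
    (hc : c ∉ ({a, b} : Finset (Fin 4))) (hd : d ∉ ({a, b} : Finset (Fin 4)))
    {y : ℝ} (hy : y ∈ S) (hoverlap : e a (e c y) = e b (e d y)) :
    (codings (fun a ↦ e a) (e a (e c y))).encard = 2 * (codings (fun a ↦ e a) y).encard := by
  have other_notMem : ∀ k ∉ ({a, b} : Finset (Fin 4)), e a (e c y) ∉ e k '' S := by
    intro k hk
    have hak : a ≠ k := by rintro rfl; simp at hk
    exact (hisol k hk).notMem_image hak (Set.mem_image_of_mem _ (hmaps c hy))
  have hsymm : (e b).symm (e a (e c y)) = e d y := by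
    rw [hoverlap, Homeomorph.symm_apply_apply]
  rw [encard_codings_eq_sum_of_notMem_image hS hzero hmaps {a, b} other_notMem,
    Finset.sum_pair hab, hsymm, Homeomorph.symm_apply_apply,
    (hisol c hc).encard_codings_apply hS hzero hmaps hy,
    (hisol d hd).encard_codings_apply hS hzero hmaps hy, two_mul]

end Counting

section Branches

variable {lam : ℝ}

theorem disjoint_affineHomeomorph_image_Icc (hpos : 0 < lam) {b c : ℝ} (hbc : b + lam < c) :
    Disjoint (affineHomeomorph lam b hpos.ne' '' Set.Icc 0 1)
      (affineHomeomorph lam c hpos.ne' '' Set.Icc 0 1) := by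
  rw [affineHomeomorph_image_Icc _ _ _ _ hpos, affineHomeomorph_image_Icc _ _ _ _ hpos,
    Set.disjoint_left]
  rintro x ⟨-, hxb⟩ ⟨hxc, -⟩
  linarith

/-- The translation part `f_{a+1}(0)` of each branch of the system; digits are `0`-based. -/
def translation (lam : ℝ) : Fin 4 → ℝ := ![0, 2 * lam, 3 * lam - lam ^ 2, 1 - lam]

/-- The branch `f_{a+1}` of the system, as a homeomorphism of the line. -/
noncomputable def branch (lam : ℝ) (hne : lam ≠ 0) (a : Fin 4) : ℝ ≃ₜ ℝ :=
  affineHomeomorph lam (translation lam a) hne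

theorem coe_branch (hne : lam ≠ 0) :
    (fun a ↦ (branch lam hne a : ℝ → ℝ)) = ![fun x ↦ lam * x, fun x ↦ lam * x + 2 * lam,
      fun x ↦ lam * x + 3 * lam - lam ^ 2, fun x ↦ lam * x + 1 - lam] := by
  ext a x
  fin_cases a <;> simp [branch, translation] <;> ring

theorem branch_one_branch_three (hne : lam ≠ 0) (y : ℝ) :
    branch lam hne 1 (branch lam hne 3 y) = branch lam hne 2 (branch lam hne 0 y) := by
  simp only [branch, translation, affineHomeomorph_apply, Matrix.cons_val]
  ring

theorem five_mul_lt_one_add_sq_s11 (hlt : lam < (5 - Real.sqrt 21) / 2) : 5 * lam < 1 + lam ^ 2 := by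
  have sq_sqrt : Real.sqrt 21 ^ 2 = 21 := Real.sq_sqrt (by norm_num)
  have roots_pos : 0 < ((5 - Real.sqrt 21) / 2 - lam) * ((5 + Real.sqrt 21) / 2 - lam) :=
    mul_pos (by linarith) (by linarith [Real.sqrt_nonneg 21])
  linarith

theorem lt_one_quarter (hlt : lam < (5 - Real.sqrt 21) / 2) : lam < 1 / 4 := by
  have : (4.5 : ℝ) < Real.sqrt 21 := Real.lt_sqrt_of_sq_lt (by norm_num)
  linarith

theorem translation_mem_Icc (hnonneg : 0 ≤ lam) (hle : lam ≤ 1 / 4) (a : Fin 4) :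
    translation lam a ∈ Set.Icc 0 (1 - lam) := by
  match a with
  | 0 => change 0 ≤ 0 ∧ 0 ≤ 1 - lam; constructor <;> linarith
  | 1 => change 0 ≤ 2 * lam ∧ 2 * lam ≤ 1 - lam; constructor <;> linarith
  | 2 => change 0 ≤ 3 * lam - lam ^ 2 ∧ 3 * lam - lam ^ 2 ≤ 1 - lam; constructor <;> nlinarith
  | 3 => change 0 ≤ 1 - lam ∧ 1 - lam ≤ 1 - lam; constructor <;> linarith

theorem mapsTo_branch_Icc (hpos : 0 < lam) (hle : lam ≤ 1 / 4) (a : Fin 4) :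
    Set.MapsTo (branch lam hpos.ne' a) (Set.Icc 0 1) (Set.Icc 0 1) := by
  rw [Set.mapsTo_iff_image_subset, branch, affineHomeomorph_image_Icc _ _ _ _ hpos]
  obtain ⟨hlow, hhigh⟩ := translation_mem_Icc hpos.le hle a
  exact Set.Icc_subset_Icc (by linarith) (by linarith)

theorem isIsolatedBranch_zero (hpos : 0 < lam) (hlt : lam < 1 / 2) :
    IsIsolatedBranch (branch lam hpos.ne') (Set.Icc 0 1) 0 := by
  intro b hb
  refine disjoint_affineHomeomorph_image_Icc hpos ?_
  match b, hb with
  | 0, hne => exact absurd rfl hne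
  | 1, _ => change 0 + lam < 2 * lam; linarith
  | 2, _ => change 0 + lam < 3 * lam - lam ^ 2; nlinarith
  | 3, _ => change 0 + lam < 1 - lam; linarith

theorem isIsolatedBranch_three (hpos : 0 < lam) (hlt : lam < 1 / 4)
    (hsep : 5 * lam < 1 + lam ^ 2) :
    IsIsolatedBranch (branch lam hpos.ne') (Set.Icc 0 1) 3 := by
  intro b hb
  refine (disjoint_affineHomeomorph_image_Icc hpos ?_).symm
  match b, hb with
  | 0, _ => change 0 + lam < 1 - lam; linarith
  | 1, _ => change 2 * lam + lam < 1 - lam; linarith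
  | 2, _ => change 3 * lam - lam ^ 2 + lam < 1 - lam; linarith
  | 3, hne => exact absurd rfl hne

theorem encard_codings_branch_one_branch_three (hpos : 0 < lam) (hlt : lam < (5 - Real.sqrt 21) / 2)
    {y : ℝ} (hy : (codings (fun a ↦ branch lam hpos.ne' a) y).Nonempty) :
    (codings (fun a ↦ branch lam hpos.ne' a)
      (branch lam hpos.ne' 1 (branch lam hpos.ne' 3 y))).encard =
      2 * (codings (fun a ↦ branch lam hpos.ne' a) y).encard := by
  have hquarter := lt_one_quarter hlt
  have hzero : (0 : ℝ) ∈ Set.Icc (0 : ℝ) 1 := ⟨le_rfl, zero_le_one⟩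
  have hmaps := mapsTo_branch_Icc hpos hquarter.le
  have hisol : ∀ k ∉ ({1, 2} : Finset (Fin 4)),
      IsIsolatedBranch (branch lam hpos.ne') (Set.Icc 0 1) k := by
    intro k hk
    obtain rfl | rfl : k = 0 ∨ k = 3 := by revert k; decide
    · exact isIsolatedBranch_zero hpos (hquarter.trans (by norm_num))
    · exact isIsolatedBranch_three hpos hquarter (five_mul_lt_one_add_sq_s11 hlt)
  exact encard_codings_of_exact_overlap isClosed_Icc hzero hmaps (by decide) hisol (by decide)
    (by decide) (mem_of_codings_nonempty isClosed_Icc hzero hmaps hy)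
    (branch_one_branch_three hpos.ne' y)

end Branches

theorem mapsTo_of_eq_union_image {α : Type*} {f : Fin 4 → α → α} {K : Set α}
    (hK : K = f 0 '' K ∪ f 1 '' K ∪ f 2 '' K ∪ f 3 '' K) (a : Fin 4) : Set.MapsTo (f a) K K := by
  intro x hx
  have hmem := Set.mem_image_of_mem (f a) hx
  rw [hK]
  fin_cases a
  · exact .inl (.inl (.inl hmem))
  · exact .inl (.inl (.inr hmem))
  · exact .inl (.inr hmem)
  · exact .inr hmem

theorem statement11_general
    (lam : ℝ) (hlam : 0 < lam ∧ lam < (5 - Real.sqrt 21) / 2)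
    (f : Fin 4 → ℝ → ℝ)
    (hf : f = ![fun x => lam * x, fun x => lam * x + 2 * lam,
      fun x => lam * x + 3 * lam - lam ^ 2, fun x => lam * x + 1 - lam])
    (K : Set ℝ) (hK : ∀ a, Set.MapsTo (f a) K K) (m : ℕ∞) (hm : m ≠ 0) :
    (f 1 ∘ f 3) '' {x ∈ K | (codings f x).encard = m} ⊆
      {x ∈ K | (codings f x).encard = 2 * m} := by
  rintro _ ⟨y, ⟨hyK, rfl⟩, rfl⟩
  refine ⟨hK 1 (hK 3 hyK), ?_⟩
  rw [← coe_branch hlam.1.ne'] at hf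
  subst hf
  exact encard_codings_branch_one_branch_three hlam.1 hlam.2 (Set.encard_ne_zero.1 hm)

/-- for every `k ≥ 1`, `f_2 (f_4 (U_{2^k})) ⊆ U_{2^{k+1}}`. -/
theorem statement11
    (lam : ℝ) (hlam : 0 < lam ∧ lam < (5 - Real.sqrt 21) / 2)
    (f : Fin 4 → ℝ → ℝ)
    (hf : f = ![fun x => lam * x, fun x => lam * x + 2 * lam,
      fun x => lam * x + 3 * lam - lam ^ 2, fun x => lam * x + 1 - lam])
    (K : Set ℝ) (hKne : K.Nonempty) (hKcpt : IsCompact K)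
    (hK : K = f 0 '' K ∪ f 1 '' K ∪ f 2 '' K ∪ f 3 '' K)
    (U : ℕ → Set ℝ)
    (hU : ∀ k : ℕ, U k = {x ∈ K | (codings f x).encard = (k : ℕ∞)})
    (k : ℕ) (hk : 1 ≤ k) :
    (f 1 ∘ f 3) '' U (2 ^ k) ⊆ U (2 ^ (k + 1)) := by
  simpa [hU, pow_succ'] using
    statement11_general lam hlam f hf K (mapsTo_of_eq_union_image hK) (2 ^ k) (by simp)
end
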